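/- Let ψ = (φ₁,…,φₙ; σ) : ℤ^k → (ℤ^k)^n ⋊ Σ_n be an irreducible morphism, with common stabilizer S, common cycle lengths n_z and common restriction φ : S → ℤ^k. Then ψ is induced by an affine n-valued map if and only if φ(n_z z) ∉ n_z ℤ^k for every z ∈ ℤ^k with z ∉ S. -/

import Mathlib

/-!
Comparing linear parts, an affine map inducing `ψ` must have a common linear part `A` with
`A s = φ s` on the stabilizer, which has finite index; so `A z = φ (M z) / M` whenever `M z` lies in
the stabilizer. The translation parts are then tied together by
`a (σ_z⁻¹ i) = a i + A z - φ_i z`, so the maps with indices `i ≠ σ_z⁻¹ i` coincide modulo `ℤ^k`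
exactly when `A z = φ (n_z z) / n_z` is integral.

Conversely, `A` is defined by this formula with `M = |Σ_n|`
(`exists_matrix_extending`), and the translations are `a i = A z - φ_{i₀} z` for any `z` with
`σ_z⁻¹ i₀ = i`. This is well defined because `A` agrees with `φ_{i₀}` on the stabilizer of `i₀`.
-/

/-- The inclusion of the standard lattice `ℤ^k` into `ℝ^k`. -/
def coeVec {k : ℕ} (z : Fin k → ℤ) : Fin k → ℝ := fun j => (z j : ℝ)

/-- `IsCycleLen τ i N` says that `N` is the smallest positive integer `m` with `τ^m i = i`,
i.e. the length of the cycle of `τ` containing `i`. -/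
def IsCycleLen {n : ℕ} (τ : Equiv.Perm (Fin n)) (i : Fin n) (N : ℕ) : Prop :=
  0 < N ∧ (τ ^ N) i = i ∧ ∀ m : ℕ, 0 < m → (τ ^ m) i = i → N ≤ m

/-- The morphism `ψ = (φ₁,…,φₙ;σ)` is induced by an affine `n`-valued map of the `k`-torus:
there are matrices `A₁,…,Aₙ` and vectors `a₁,…,aₙ` satisfying the lift-equivariance
equation, such that the affine maps are pairwise distinct modulo `ℤ^k`. -/
def InducedByAffine {k n : ℕ} (σ : (Fin k → ℤ) → Equiv.Perm (Fin n))
    (φ : Fin n → (Fin k → ℤ) → Fin k → ℤ) : Prop :=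
  ∃ (A : Fin n → Matrix (Fin k) (Fin k) ℝ) (a : Fin n → Fin k → ℝ),
    (∀ (i : Fin n) (z : Fin k → ℤ) (t : Fin k → ℝ),
      (A i).mulVec (t + coeVec z) + a i =
        (A ((σ z)⁻¹ i)).mulVec t + a ((σ z)⁻¹ i) + coeVec (φ i z)) ∧
    (∀ i j : Fin n, i ≠ j → ∀ t : Fin k → ℝ,
      ¬ ∃ w : Fin k → ℤ, ((A i).mulVec t + a i) - ((A j).mulVec t + a j) = coeVec w)

lemma coeVec_add {k : ℕ} (x y : Fin k → ℤ) : coeVec (x + y) = coeVec x + coeVec y := by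
  ext j; simp [coeVec]

lemma coeVec_sub {k : ℕ} (x y : Fin k → ℤ) : coeVec (x - y) = coeVec x - coeVec y := by
  ext j; simp [coeVec]

lemma coeVec_nsmul {k : ℕ} (m : ℕ) (x : Fin k → ℤ) : coeVec (m • x) = (m : ℝ) • coeVec x := by
  ext j; simp [coeVec]

lemma coeVec_injective {k : ℕ} : Function.Injective (coeVec (k := k)) := by
  intro x y h
  ext j
  simpa [coeVec] using congrFun h j

section Cocycle

variable {k n : ℕ} {σ : (Fin k → ℤ) → Equiv.Perm (Fin n)}
  {φ : Fin n → (Fin k → ℤ) → Fin k → ℤ}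

lemma sigma_zero (hσ : ∀ z₁ z₂, σ (z₁ + z₂) = σ z₁ * σ z₂) : σ 0 = 1 := by
  have h := hσ 0 0
  rw [add_zero] at h
  exact (left_eq_mul.mp h)

lemma sigma_nsmul (hσ : ∀ z₁ z₂, σ (z₁ + z₂) = σ z₁ * σ z₂) (m : ℕ) (z : Fin k → ℤ) :
    σ (m • z) = σ z ^ m := by
  induction m with
  | zero => simp [sigma_zero hσ]
  | succ m ih => rw [succ_nsmul, hσ, ih, pow_succ]

lemma sigma_sub (hσ : ∀ z₁ z₂, σ (z₁ + z₂) = σ z₁ * σ z₂) (x y : Fin k → ℤ) :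
    σ (x - y) = σ x * (σ y)⁻¹ := by
  rw [eq_mul_inv_iff_mul_eq, ← hσ, sub_add_cancel]

lemma phi_add_of_fixed (hφ : ∀ i z₁ z₂, φ i (z₁ + z₂) = φ i z₁ + φ ((σ z₁)⁻¹ i) z₂)
    {i : Fin n} {s : Fin k → ℤ} (hs : σ s i = i) (z : Fin k → ℤ) :
    φ i (s + z) = φ i s + φ i z := by
  rw [hφ, Equiv.Perm.inv_eq_iff_eq.mpr hs.symm]

lemma phi_nsmul_of_fixed (hσ : ∀ z₁ z₂, σ (z₁ + z₂) = σ z₁ * σ z₂)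
    (hφ : ∀ i z₁ z₂, φ i (z₁ + z₂) = φ i z₁ + φ ((σ z₁)⁻¹ i) z₂)
    {i : Fin n} {s : Fin k → ℤ} (hs : σ s i = i) (m : ℕ) :
    φ i (m • s) = m • φ i s := by
  induction m with
  | zero =>
    have h := phi_add_of_fixed hφ (i := i) (s := 0) (by simp [sigma_zero hσ]) 0
    rw [add_zero] at h
    simpa using h
  | succ m ih => rw [succ_nsmul', phi_add_of_fixed hφ hs, ih, succ_nsmul']

/-- The restriction of `φ_i` to the stabilizer of `i` is a homomorphism on a finite-index
sublattice, hence extends to a linear map of `ℝ^k`. -/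
lemma exists_matrix_extending (hσ : ∀ z₁ z₂, σ (z₁ + z₂) = σ z₁ * σ z₂)
    (hφ : ∀ i z₁ z₂, φ i (z₁ + z₂) = φ i z₁ + φ ((σ z₁)⁻¹ i) z₂) (i : Fin n) :
    ∃ A : Matrix (Fin k) (Fin k) ℝ, ∀ s, σ s i = i → A.mulVec (coeVec s) = coeVec (φ i s) := by
  set M := Fintype.card (Equiv.Perm (Fin n)) with hM
  have hM0 : (M : ℝ) ≠ 0 := by exact_mod_cast Fintype.card_ne_zero
  have hfix : ∀ z, σ (M • z) i = i := fun z => by rw [sigma_nsmul hσ, pow_card_eq_one]; rfl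
  let f : (Fin k → ℤ) →+ (Fin k → ℤ) := AddMonoidHom.mk' (fun z => φ i (M • z))
    fun x y => by rw [smul_add, phi_add_of_fixed hφ (hfix x)]
  refine ⟨(M : ℝ)⁻¹ • (LinearMap.toMatrix' f.toIntLinearMap).map (Int.castRingHom ℝ), ?_⟩
  intro s hs
  have h1 : ((LinearMap.toMatrix' f.toIntLinearMap).map (Int.castRingHom ℝ)).mulVec (coeVec s)
      = coeVec (f s) := by
    ext j
    have h2 := RingHom.map_mulVec (Int.castRingHom ℝ) (LinearMap.toMatrix' f.toIntLinearMap) s j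
    rw [LinearMap.toMatrix'_mulVec] at h2
    exact h2.symm
  rw [Matrix.smul_mulVec, h1]
  change (M : ℝ)⁻¹ • coeVec (φ i (M • s)) = _
  rw [phi_nsmul_of_fixed hσ hφ hs, coeVec_nsmul, smul_smul, inv_mul_cancel₀ hM0, one_smul]

end Cocycle

theorem stmt8 {k n : ℕ} (hk : 1 ≤ k) (hn : 1 ≤ n)
    (σ : (Fin k → ℤ) → Equiv.Perm (Fin n))
    (hσ : ∀ z₁ z₂ : Fin k → ℤ, σ (z₁ + z₂) = σ z₁ * σ z₂)
    (φ : Fin n → (Fin k → ℤ) → Fin k → ℤ)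
    (hφ : ∀ (i : Fin n) (z₁ z₂ : Fin k → ℤ),
      φ i (z₁ + z₂) = φ i z₁ + φ ((σ z₁)⁻¹ i) z₂)
    (hirr : ∀ i j : Fin n, ∃ z : Fin k → ℤ, σ z i = j) :
    InducedByAffine σ φ ↔
      ∀ (i : Fin n) (z : Fin k → ℤ) (N : ℕ), ¬ σ z i = i → IsCycleLen (σ z) i N →
        ¬ ∃ w : Fin k → ℤ, φ i ((N : ℤ) • z) = (N : ℤ) • w := by
  constructor
  · rintro ⟨A, a, hA, hd⟩ i z N hz ⟨hN, hfix, -⟩ ⟨w, hw⟩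
    have hN0 : (N : ℝ) ≠ 0 := by exact_mod_cast hN.ne'
    rw [natCast_zsmul, natCast_zsmul] at hw
    have hinv : (σ (N • z))⁻¹ i = i := by
      rw [sigma_nsmul hσ]; exact Equiv.Perm.inv_eq_iff_eq.mpr hfix.symm
    have h1 := hA i (N • z) 0
    rw [hinv, hw, zero_add, Matrix.mulVec_zero, zero_add, add_comm, add_right_inj, coeVec_nsmul,
      coeVec_nsmul, Matrix.mulVec_smul] at h1
    have h2 : (A i).mulVec (coeVec z) = coeVec w := smul_right_injective _ hN0 h1
    have h3 := hA i z 0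
    rw [zero_add, Matrix.mulVec_zero, zero_add, h2] at h3
    -- As `A i` sends `z` to the integral vector `w`, the branches `i` and `σ_z⁻¹ i` collide at `0`.
    refine hd i ((σ z)⁻¹ i) (fun h => hz (Equiv.Perm.inv_eq_iff_eq.mp h.symm).symm) 0
      ⟨φ i z - w, ?_⟩
    rw [Matrix.mulVec_zero, Matrix.mulVec_zero, zero_add, zero_add, coeVec_sub,
      sub_eq_sub_iff_add_eq_add, add_comm, h3, add_comm]
  · intro H
    let o : Fin n := ⟨0, hn⟩
    obtain ⟨A, hA⟩ := exists_matrix_extending hσ hφ o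
    choose ζ hζ using fun i => hirr i o
    have key : ∀ x y, (σ x)⁻¹ o = (σ y)⁻¹ o →
        A.mulVec (coeVec x) - coeVec (φ o x) = A.mulVec (coeVec y) - coeVec (φ o y) := by
      intro x y hxy
      have hs : σ (x - y) o = o := by
        rw [sigma_sub hσ, Equiv.Perm.mul_apply, ← hxy]
        exact (σ x).apply_symm_apply o
      have h1 := hA _ hs
      have h2 := phi_add_of_fixed hφ hs y
      rw [sub_add_cancel] at h2
      rw [coeVec_sub, Matrix.mulVec_sub] at h1
      rw [h2, coeVec_add, ← h1]
      abel
    refine ⟨fun _ => A, fun i => A.mulVec (coeVec (ζ i)) - coeVec (φ o (ζ i)), ?_, ?_⟩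
    · intro i z t
      have hi : (σ (ζ i))⁻¹ o = i := Equiv.Perm.inv_eq_iff_eq.mpr (hζ i).symm
      have h1 := key (ζ i + z) (ζ ((σ z)⁻¹ i)) (by
        rw [Equiv.Perm.inv_eq_iff_eq.mpr (hζ ((σ z)⁻¹ i)).symm, hσ, mul_inv_rev,
          Equiv.Perm.mul_apply, hi])
      rw [hφ, hi, coeVec_add, coeVec_add, Matrix.mulVec_add] at h1
      simp only [← h1, Matrix.mulVec_add]
      abel
    · rintro i j hij t ⟨w, hw⟩
      set z := ζ i - ζ j with hzdef
      have hz : σ z o ≠ o := by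
        rw [hzdef, sigma_sub hσ, Equiv.Perm.mul_apply,
          Equiv.Perm.inv_eq_iff_eq.mpr (hζ j).symm]
        intro h
        exact hij ((σ (ζ i)).injective ((hζ i).trans h.symm))
      have hex : ∃ m : ℕ, 0 < m ∧ (σ z ^ m) o = o :=
        ⟨_, orderOf_pos (σ z), by rw [pow_orderOf_eq_one]; rfl⟩
      dsimp only at hw
      classical
      obtain ⟨hN, hfix⟩ := Nat.find_spec hex
      set N := Nat.find hex with hNdef
      refine H o z N hz ⟨hN, hfix, fun m hm h => Nat.find_min' hex ⟨hm, h⟩⟩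
        ⟨w + φ o (ζ i) - φ o (ζ j), ?_⟩
      rw [natCast_zsmul, natCast_zsmul]
      apply coeVec_injective
      rw [← hA _ (by rw [sigma_nsmul hσ]; exact hfix), coeVec_nsmul, coeVec_nsmul,
        Matrix.mulVec_smul, hzdef, coeVec_sub, Matrix.mulVec_sub, coeVec_sub, coeVec_add, ← hw]
      congr 1
      abel
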